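/- Let F be a finite field with q elements, n ≥ 2, and let k_1, …, k_{n-1} be natural numbers. Then #P_{n;k_1,…,k_{n-1},0} = q^{k_1 + k_2 + ⋯ + k_{n-1}} · #P_{n-1;k_1,…,k_{n-1}}. -/

import Mathlib

open Polynomial Matrix

/-- `P_{m;k₁,…,k_m}`: the set of `A ∈ GL_m(F[x])` with `deg a_{i,j} ≤ k_j` for all `i, j` and
constant-term matrix equal to the identity. -/
def Pset (F : Type*) [Field F] (m : ℕ) (k : Fin m → ℕ) : Set (GL (Fin m) F[X]) :=
  {A | (∀ i j, ((A : Matrix (Fin m) (Fin m) F[X]) i j).degree ≤ (k j : ℕ)) ∧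
       (A : Matrix (Fin m) (Fin m) F[X]).map (fun p => p.coeff 0) = 1}

/-- The matrix version of `Pset`. -/
def Qset (F : Type*) [Field F] (m : ℕ) (k : Fin m → ℕ) : Set (Matrix (Fin m) (Fin m) F[X]) :=
  {A | IsUnit A.det ∧ (∀ i j, (A i j).degree ≤ (k j : ℕ)) ∧
       A.map (fun p => p.coeff 0) = 1}

lemma ncard_Pset_eq (F : Type*) [Field F] (m : ℕ) (k : Fin m → ℕ) :
    (Pset F m k).ncard = (Qset F m k).ncard := by
  have h : (fun A : GL (Fin m) F[X] => (A : Matrix (Fin m) (Fin m) F[X])) '' Pset F m k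
      = Qset F m k := by
    ext A
    constructor
    · rintro ⟨B, hB, rfl⟩
      exact ⟨(Matrix.isUnit_iff_isUnit_det _).1 B.isUnit, hB.1, hB.2⟩
    · rintro ⟨hA, h1, h2⟩
      obtain ⟨B, rfl⟩ := (Matrix.isUnit_iff_isUnit_det _).2 hA
      exact ⟨B, ⟨h1, h2⟩, rfl⟩
  rw [← h, Set.ncard_image_of_injective]
  intro A B hAB
  exact Units.ext hAB

/-- polynomials of degree at most `k` without constant term -/
def Sset (F : Type*) [Field F] (k : ℕ) : Set F[X] :=
  {p | p.degree ≤ (k : ℕ) ∧ p.coeff 0 = 0}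

lemma card_Sset (F : Type*) [Field F] [Fintype F] (k : ℕ) :
    Nat.card (Sset F k) = Fintype.card F ^ k := by
  have h : (fun p : F[X] => X * p) '' (degreeLT F k : Set F[X]) = Sset F k := by
    ext p
    constructor
    · rintro ⟨r, hr, rfl⟩
      refine ⟨?_, by simp⟩
      rw [degree_le_iff_coeff_zero]
      intro N hN
      have hr' := mem_degreeLT.1 hr
      cases N with
      | zero => simp
      | succ N =>
        simp only [coeff_X_mul]
        rw [degree_lt_iff_coeff_zero] at hr'
        apply hr'
        have : k < N + 1 := by exact_mod_cast hN
        omega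
    · rintro ⟨h1, h2⟩
      obtain ⟨r, rfl⟩ := X_dvd_iff.2 h2
      refine ⟨r, ?_, rfl⟩
      refine mem_degreeLT.2 ?_
      rw [degree_lt_iff_coeff_zero]
      intro N hN
      rw [← coeff_X_mul]
      rw [degree_le_iff_coeff_zero] at h1
      apply h1
      exact_mod_cast Nat.lt_succ_of_le hN
  rw [← h, Nat.card_image_of_injective]
  · rw [SetLike.coe_sort_coe, Nat.card_congr (degreeLTEquiv F k).toEquiv]
    simp
  · exact mul_right_injective₀ X_ne_zero

/-- the block matrix `[B 0; r 1]` -/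
noncomputable def blk (F : Type*) [Field F] (m : ℕ)
    (x : (Fin m → F[X]) × Matrix (Fin m) (Fin m) F[X]) :
    Matrix (Fin (m + 1)) (Fin (m + 1)) F[X] :=
  Matrix.of (Fin.snoc (α := fun _ => Fin (m + 1) → F[X])
    (fun i => Fin.snoc (α := fun _ => F[X]) (x.2 i) 0)
    (Fin.snoc (α := fun _ => F[X]) x.1 1))

section
variable {F : Type*} [Field F] {m : ℕ} (x : (Fin m → F[X]) × Matrix (Fin m) (Fin m) F[X])

@[simp] lemma blk_cc (i j : Fin m) : blk F m x i.castSucc j.castSucc = x.2 i j := by simp [blk]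
@[simp] lemma blk_cl (i : Fin m) : blk F m x i.castSucc (Fin.last m) = 0 := by simp [blk]
@[simp] lemma blk_lc (j : Fin m) : blk F m x (Fin.last m) j.castSucc = x.1 j := by simp [blk]
@[simp] lemma blk_ll : blk F m x (Fin.last m) (Fin.last m) = 1 := by simp [blk]

lemma blk_det : (blk F m x).det = x.2.det := by
  rw [Matrix.det_succ_column _ (Fin.last m), Fin.sum_univ_castSucc]
  have : (blk F m x).submatrix Fin.castSucc Fin.castSucc = x.2 := by
    ext1 i j; simp
  simp [Fin.succAbove_last, this, ← two_mul]
end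

lemma Qset_succ (F : Type*) [Field F] (m : ℕ) (k : Fin m → ℕ) :
    Qset F (m + 1) (fun j => if h : (j : ℕ) < m then k ⟨j, h⟩ else 0)
      = blk F m '' ((Set.univ.pi fun j => Sset F (k j)) ×ˢ Qset F m k) := by
  ext A
  constructor
  · rintro ⟨h0, h1, h2⟩
    have h2' : ∀ i j, (A i j).coeff 0 = (1 : Matrix _ _ F) i j := fun i j =>
      congrFun (congrFun h2 i) j
    have hl : ∀ i, A i (Fin.last m) = C ((1 : Matrix _ _ F) i (Fin.last m)) := by
      intro i
      rw [← h2']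
      apply eq_C_of_degree_le_zero
      simpa using h1 i (Fin.last m)
    have hA : blk F m (fun j => A (Fin.last m) j.castSucc,
        A.submatrix Fin.castSucc Fin.castSucc) = A := by
      ext1 i j
      refine Fin.lastCases ?_ (fun i => ?_) i <;> refine Fin.lastCases ?_ (fun j => ?_) j
      · simp [hl]
      · simp
      · simp [hl, Matrix.one_apply, Fin.castSucc_ne_last]
      · simp
    refine ⟨_, ⟨?_, ?_, ?_, ?_⟩, hA⟩
    · intro j _
      refine ⟨by simpa using h1 (Fin.last m) j.castSucc, ?_⟩
      simp [h2', Matrix.one_apply, (Fin.castSucc_ne_last _).symm]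
    · rw [← hA, blk_det] at h0
      exact h0
    · intro i j
      simpa using h1 i.castSucc j.castSucc
    · ext i j
      simp [h2', Matrix.one_apply]
  · rintro ⟨⟨r, B⟩, ⟨hr, h0, h1, h2⟩, rfl⟩
    have h2' : ∀ i j, (B i j).coeff 0 = (1 : Matrix _ _ F) i j := fun i j =>
      congrFun (congrFun h2 i) j
    refine ⟨by rw [blk_det]; exact h0, ?_, ?_⟩
    · intro i j
      refine Fin.lastCases ?_ (fun i => ?_) i <;> refine Fin.lastCases ?_ (fun j => ?_) j
      · simp
      · simpa using (hr j trivial).1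
      · simp
      · simpa using h1 i j
    · ext i j
      refine Fin.lastCases ?_ (fun i => ?_) i <;> refine Fin.lastCases ?_ (fun j => ?_) j
      · simp
      · simpa [Matrix.one_apply, (Fin.castSucc_ne_last _).symm] using (hr j trivial).2
      · simp [Matrix.one_apply, Fin.castSucc_ne_last]
      · simp [h2', Matrix.one_apply]

lemma blk_injective (F : Type*) [Field F] (m : ℕ) : Function.Injective (blk F m) := by
  rintro ⟨r, B⟩ ⟨r', B'⟩ h
  refine Prod.ext ?_ ?_
  · funext j
    have := congrFun (congrFun h (Fin.last m)) j.castSucc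
    simpa only [blk_lc] using this
  · ext1 i j
    have := congrFun (congrFun h i.castSucc) j.castSucc
    simpa only [blk_cc] using this

lemma main_succ (F : Type*) [Field F] [Fintype F] (m : ℕ) (k : Fin m → ℕ) :
    (Pset F (m + 1) (fun j => if h : (j : ℕ) < m then k ⟨j, h⟩ else 0)).ncard
      = Fintype.card F ^ (∑ j, k j) * (Pset F m k).ncard := by
  rw [ncard_Pset_eq, ncard_Pset_eq, Qset_succ,
    Set.ncard_image_of_injective _ (blk_injective F m), Set.ncard_prod]
  congr 1
  rw [← Nat.card_coe_set_eq, Nat.card_congr (Equiv.Set.univPi _), Nat.card_pi]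
  simp only [card_Sset, Finset.prod_pow_eq_pow_sum]

/-- For `n ≥ 2`,
`#P_{n;k₁,…,k_{n-1},0} = q^{k₁ + ⋯ + k_{n-1}} · #P_{n-1;k₁,…,k_{n-1}}`. -/
theorem stmt_8 (F : Type*) [Field F] [Fintype F] (q : ℕ) (hq : Fintype.card F = q)
    (n : ℕ) (hn : 2 ≤ n) (k : Fin (n - 1) → ℕ) :
    (Pset F n (fun j : Fin n => if h : (j : ℕ) < n - 1 then k ⟨j, h⟩ else 0)).ncard
      = q ^ (∑ j, k j) * (Pset F (n - 1) k).ncard := by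
  subst hq
  obtain ⟨m, rfl⟩ : ∃ m, n = m + 1 := ⟨n - 1, by omega⟩
  exact main_succ F m k
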